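/- Let G=(V,E) be a finite weighted graph, k ≥ 1 a real number, 0 < ε < 1, ρ > 0, and B ⊆ P ⊆ V. Let S be a nonempty subset of P, and define S_B = S∩B, T_B = B∖S, and S_P = S∖B. Assume vol(S_B) ≤ vol(B)/2 and: (1) if S_P ≠ ∅ then φ(S_P) ≥ ρ and e(S_P, P) ≥ e(S_P, V)/k; (2) if S_B ≠ ∅ then max{φ(S_B), φ(T_B)} ≥ ρ, e(S_B,B)·vol(B) ≥ (ε/3)·vol(T_B)·e(S_B,V∖B), and e(T_B,B)·vol(B) ≥ (ε/3)·vol(S_B)·e(T_B,V∖B). Then e(S,P)/vol(S) ≥ ε·ρ/(14k); in particular the conductance of S inside the induced subgraph G[P] is at least ε·ρ/(14k). -/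

import Mathlib

open Finset

/-- Weighted degree of a vertex. -/
noncomputable def deg {V : Type*} [Fintype V] (w : V → V → ℝ) (v : V) : ℝ :=
  ∑ u, w v u

/-- Volume of a set of vertices. -/
noncomputable def vol {V : Type*} [Fintype V] (w : V → V → ℝ) (S : Finset V) : ℝ :=
  ∑ v ∈ S, deg w v

/-- Total weight of edges from `S` to `T \ S`. -/
noncomputable def eW {V : Type*} [DecidableEq V] (w : V → V → ℝ) (S T : Finset V) : ℝ :=
  ∑ u ∈ S, ∑ v ∈ T \ S, w u v

/-- Conductance of `S` in `G`. -/
noncomputable def phi {V : Type*} [Fintype V] [DecidableEq V] (w : V → V → ℝ)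
    (S : Finset V) : ℝ :=
  eW w S Finset.univ / vol w S

/-- Volume of `S ⊆ P` inside the induced subgraph `G[P]`. -/
noncomputable def volIn {V : Type*} [DecidableEq V] (w : V → V → ℝ) (P S : Finset V) : ℝ :=
  ∑ v ∈ S, ∑ u ∈ P, w v u

/-- `φ(G[P]) ≥ a` : every nonempty proper `S ⊊ P` with at most half of the induced volume
has induced conductance at least `a` (stated multiplicatively). -/
def inCondGE {V : Type*} [DecidableEq V] (w : V → V → ℝ) (P : Finset V) (a : ℝ) : Prop :=
  ∀ S : Finset V, S ⊆ P → S.Nonempty → S ≠ P →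
    volIn w P S ≤ volIn w P P / 2 → a * volIn w P S ≤ eW w S P

/-- `ρ(k)`: the minimum over families of `k` pairwise disjoint nonempty subsets of the
maximum conductance. -/
noncomputable def rho {V : Type*} [Fintype V] [DecidableEq V] (w : V → V → ℝ) (k : ℕ) : ℝ :=
  sInf { r | ∃ A : Fin k → Finset V, (∀ i, (A i).Nonempty) ∧
    (∀ i j, i ≠ j → Disjoint (A i) (A j)) ∧ r = ⨆ i, phi w (A i) }

/-- The normalized Laplacian `I - D^{-1/2} A D^{-1/2}`. -/
noncomputable def normLap {V : Type*} [Fintype V] [DecidableEq V] (w : V → V → ℝ) : Matrix V V ℝ :=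
  1 - Matrix.of fun u v => w u v / (Real.sqrt (deg w u) * Real.sqrt (deg w v))

/-- `lam w k` is the `k`-th smallest eigenvalue (1-indexed) of the normalized Laplacian. -/
noncomputable def lam {V : Type*} [Fintype V] [DecidableEq V] (w : V → V → ℝ) (k : ℕ) : ℝ :=
  if h : (normLap w).IsHermitian then
    ((Finset.univ.val.map h.eigenvalues).sort (· ≤ ·)).getD (k - 1) 0
  else 0


/-!
Put `A = S ∩ B` and `x = e(A, B) = e(B \ A, B)`. Since `A` carries at most half of the volume of
`B`, the relative conductance hypotheses say that few edges leave `B` from `A` or from `B \ A`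
compared with `x`; for instance `ε e(A, V \ B) ≤ 6 x`, where `6` is `3` from `ε / 3` times `2` from
the halved volume. So, whichever of `A` and `B \ A` has conductance at least `ρ`, the volume of `A`
is controlled by `x`, and `x ≤ e(S, P)`. The edges leaving `S \ B` inside `P` either leave `S`, and
are counted in `e(S, P)`, or end in `A`, and are again few compared with `x`.
-/

section EdgeWeight

variable {V : Type*} [DecidableEq V] {w : V → V → ℝ}

theorem eW_nonneg (hw : ∀ u v, 0 ≤ w u v) (S T : Finset V) : 0 ≤ eW w S T :=
  sum_nonneg fun u _ => sum_nonneg fun v _ => hw u v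

theorem eW_mono (hw : ∀ u v, 0 ≤ w u v) {S S' T T' : Finset V} (hS : S ⊆ S')
    (hT : T \ S ⊆ T' \ S') : eW w S T ≤ eW w S' T' :=
  (sum_le_sum fun u _ => sum_le_sum_of_subset_of_nonneg hT fun v _ _ => hw u v).trans <|
    sum_le_sum_of_subset_of_nonneg hS fun u _ _ => sum_nonneg fun v _ => hw u v

theorem eW_inter_add_eW_sdiff (w : V → V → ℝ) (S T C : Finset V) :
    eW w S (T ∩ C) + eW w S (T \ C) = eW w S T := by
  simp only [eW, ← sum_add_distrib]
  refine sum_congr rfl fun u _ => ?_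
  rw [← sum_inter_add_sum_sdiff (T \ S) C, sdiff_inter_right_comm, sdiff_right_comm]

theorem eW_comm_of_disjoint (hsym : ∀ u v, w u v = w v u) {S T : Finset V} (h : Disjoint S T) :
    eW w S T = eW w T S := by
  rw [eW, eW, sdiff_eq_self_of_disjoint h.symm, sdiff_eq_self_of_disjoint h, sum_comm]
  exact sum_congr rfl fun v _ => sum_congr rfl fun u _ => hsym u v

theorem eW_sdiff_left (hsym : ∀ u v, w u v = w v u) {A B : Finset V} (hAB : A ⊆ B) :
    eW w (B \ A) B = eW w A B := calc
  eW w (B \ A) B = eW w (B \ A) A := by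
    simp only [eW, Finset.sdiff_sdiff_eq_self hAB, sdiff_eq_self_of_disjoint disjoint_sdiff]
  _ = eW w A (B \ A) := eW_comm_of_disjoint hsym sdiff_disjoint
  _ = eW w A B := by simp only [eW, Finset.sdiff_idem]

theorem eW_le_eW_add_eW_sdiff (hw : ∀ u v, 0 ≤ w u v) {A S : Finset V} (hAS : A ⊆ S)
    (P : Finset V) : eW w A P ≤ eW w S P + eW w A (S \ A) := by
  rw [← eW_inter_add_eW_sdiff w A P S, add_comm]
  refine add_le_add (eW_mono hw hAS sdiff_subset) (eW_mono hw subset_rfl ?_)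
  rw [Finset.sdiff_idem]
  exact sdiff_subset_sdiff inter_subset_right subset_rfl

theorem volIn_nonneg (hw : ∀ u v, 0 ≤ w u v) (P S : Finset V) : 0 ≤ volIn w P S :=
  sum_nonneg fun v _ => sum_nonneg fun u _ => hw v u

end EdgeWeight

section Volume

variable {V : Type*} [Fintype V] {w : V → V → ℝ}

theorem vol_nonneg (hw : ∀ u v, 0 ≤ w u v) (S : Finset V) : 0 ≤ vol w S :=
  sum_nonneg fun v _ => sum_nonneg fun u _ => hw v u

theorem vol_pos (hdeg : ∀ v, 0 < deg w v) {S : Finset V} (hS : S.Nonempty) : 0 < vol w S :=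
  sum_pos (fun v _ => hdeg v) hS

variable [DecidableEq V]

theorem vol_inter_add_vol_sdiff (w : V → V → ℝ) (S B : Finset V) :
    vol w (S ∩ B) + vol w (S \ B) = vol w S :=
  sum_inter_add_sum_sdiff S B (deg w)

theorem vol_add_vol_sdiff (w : V → V → ℝ) {A B : Finset V} (hAB : A ⊆ B) :
    vol w A + vol w (B \ A) = vol w B := by
  rw [← vol_inter_add_vol_sdiff w B A, inter_eq_right.2 hAB]

theorem volIn_le_vol (hw : ∀ u v, 0 ≤ w u v) (P S : Finset V) : volIn w P S ≤ vol w S :=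
  sum_le_sum fun v _ => sum_le_univ_sum_of_nonneg fun u => hw v u

theorem mul_vol_le_eW_of_le_phi (hw : ∀ u v, 0 ≤ w u v) {ρ : ℝ} {S : Finset V}
    (h : ρ ≤ phi w S) : ρ * vol w S ≤ eW w S univ :=
  mul_le_of_le_div₀ (eW_nonneg hw S univ) (vol_nonneg hw S) h

theorem mul_volIn_le_eW_of_le_div_vol (hw : ∀ u v, 0 ≤ w u v) {c : ℝ} {P S : Finset V}
    (h : c ≤ eW w S P / vol w S) : c * volIn w P S ≤ eW w S P := calc
  c * volIn w P S ≤ eW w S P / vol w S * volIn w P S :=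
    mul_le_mul_of_nonneg_right h (volIn_nonneg hw P S)
  _ ≤ eW w S P / vol w S * vol w S :=
    mul_le_mul_of_nonneg_left (volIn_le_vol hw P S)
      (div_nonneg (eW_nonneg hw S P) (vol_nonneg hw S))
  _ ≤ eW w S P := mul_le_of_le_div₀ (eW_nonneg hw S P) (vol_nonneg hw S) le_rfl

end Volume

section Expansion

variable {V : Type*} [Fintype V] [DecidableEq V] {w : V → V → ℝ} {ε ρ k : ℝ} {A B P S : Finset V}

theorem vol_div_two_le_vol_sdiff (hAB : A ⊆ B) (hhalf : vol w A ≤ vol w B / 2) :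
    vol w B / 2 ≤ vol w (B \ A) := by
  linarith [vol_add_vol_sdiff w hAB]

theorem mul_eW_sdiff_le_six_mul_eW (hw : ∀ u v, 0 ≤ w u v) (hε : 0 ≤ ε) (hAB : A ⊆ B)
    (hB : 0 < vol w B) (hhalf : vol w A ≤ vol w B / 2)
    (hA : ε / 3 * vol w (B \ A) * eW w A (univ \ B) ≤ eW w A B * vol w B) :
    ε * eW w A (univ \ B) ≤ 6 * eW w A B := by
  have hout := eW_nonneg hw A (univ \ B)
  have h : ε / 3 * (vol w B / 2) * eW w A (univ \ B) ≤ eW w A B * vol w B :=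
    le_trans (by gcongr; exact vol_div_two_le_vol_sdiff hAB hhalf) hA
  exact le_of_mul_le_mul_right (by linarith) hB

/- The factor `vol w (B \ A)` on the left lets the bound be used with `A` and `B \ A` exchanged,
whichever of them has large conductance. -/
theorem mul_vol_mul_vol_sdiff_le (hw : ∀ u v, 0 ≤ w u v) (hε : 0 ≤ ε) (hφ : ρ ≤ phi w A)
    (hA : ε / 3 * vol w (B \ A) * eW w A (univ \ B) ≤ eW w A B * vol w B) :
    ε * ρ * (vol w A * vol w (B \ A)) ≤ (ε * vol w (B \ A) + 3 * vol w B) * eW w A B := by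
  have hcut : ρ * vol w A ≤ eW w A B + eW w A (univ \ B) := by
    simpa only [← eW_inter_add_eW_sdiff w A univ B, univ_inter]
      using mul_vol_le_eW_of_le_phi hw hφ
  have h := mul_le_mul_of_nonneg_left hcut (mul_nonneg hε (vol_nonneg hw (B \ A)))
  linarith

theorem mul_vol_le_mul_eW_of_le_max_phi (hsym : ∀ u v, w u v = w v u) (hw : ∀ u v, 0 ≤ w u v)
    (hε : 0 ≤ ε) (hAB : A ⊆ B) (hB : 0 < vol w B) (hhalf : vol w A ≤ vol w B / 2)
    (hφ : ρ ≤ max (phi w A) (phi w (B \ A)))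
    (hA : ε / 3 * vol w (B \ A) * eW w A (univ \ B) ≤ eW w A B * vol w B)
    (hA' : ε / 3 * vol w A * eW w (B \ A) (univ \ B) ≤ eW w (B \ A) B * vol w B) :
    ε * ρ * vol w A ≤ (ε + 6) * eW w A B := by
  have hx := eW_nonneg hw A B
  have hhalf' := vol_div_two_le_vol_sdiff hAB hhalf
  suffices h : ε * ρ * (vol w A * vol w (B \ A)) ≤
      (ε * vol w (B \ A) + 3 * (2 * vol w (B \ A))) * eW w A B from
    le_of_mul_le_mul_right (by linarith) (show 0 < vol w (B \ A) by linarith)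
  rcases le_max_iff.1 hφ with hφ | hφ
  · refine (mul_vol_mul_vol_sdiff_le hw hε hφ hA).trans ?_
    gcongr
    linarith
  · have h := mul_vol_mul_vol_sdiff_le (B := B) hw hε hφ (by rwa [Finset.sdiff_sdiff_eq_self hAB])
    rw [Finset.sdiff_sdiff_eq_self hAB, eW_sdiff_left hsym hAB, mul_comm (vol w (B \ A))] at h
    refine h.trans ?_
    gcongr <;> linarith

theorem eW_sdiff_le_eW_add_eW_inter (hsym : ∀ u v, w u v = w v u) (hw : ∀ u v, 0 ≤ w u v)
    (B P S : Finset V) : eW w (S \ B) P ≤ eW w S P + eW w (S ∩ B) (univ \ B) := by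
  refine (eW_le_eW_add_eW_sdiff hw sdiff_subset P).trans (add_le_add_right ?_ _)
  rw [sdiff_sdiff_right_self, inf_eq_inter, eW_comm_of_disjoint hsym (disjoint_sdiff_inter S B)]
  exact eW_mono hw subset_rfl
    (sdiff_subset_sdiff (sdiff_subset_sdiff (subset_univ S) subset_rfl) subset_rfl)

theorem mul_vol_le_mul_eW_of_inter_of_sdiff (hsym : ∀ u v, w u v = w v u) (hw : ∀ u v, 0 ≤ w u v)
    (hε : 0 ≤ ε) (hk : 0 ≤ k) (hBP : B ⊆ P)
    (hin : ε * ρ * vol w (S ∩ B) ≤ (ε + 6) * eW w (S ∩ B) B)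
    (hout : ε * eW w (S ∩ B) (univ \ B) ≤ 6 * eW w (S ∩ B) B)
    (hsdiff : ρ * vol w (S \ B) ≤ k * eW w (S \ B) P) :
    ε * ρ * vol w S ≤ (ε + 6) * (k + 1) * eW w S P := by
  have hx : eW w (S ∩ B) B ≤ eW w S P := eW_mono hw inter_subset_left <| by
    rw [sdiff_inter_self_right]
    exact sdiff_subset_sdiff hBP subset_rfl
  have hP : ε * eW w (S \ B) P ≤ (ε + 6) * eW w S P := calc
    ε * eW w (S \ B) P ≤ ε * (eW w S P + eW w (S ∩ B) (univ \ B)) := by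
      gcongr
      exact eW_sdiff_le_eW_add_eW_inter hsym hw B P S
    _ ≤ (ε + 6) * eW w S P := by linarith
  calc ε * ρ * vol w S
    _ = ε * ρ * vol w (S ∩ B) + ε * (ρ * vol w (S \ B)) := by
      rw [← vol_inter_add_vol_sdiff w S B]
      ring
    _ ≤ (ε + 6) * eW w (S ∩ B) B + ε * (k * eW w (S \ B) P) := by gcongr
    _ = (ε + 6) * eW w (S ∩ B) B + k * (ε * eW w (S \ B) P) := by ring
    _ ≤ (ε + 6) * eW w S P + k * ((ε + 6) * eW w S P) := by gcongr
    _ = (ε + 6) * (k + 1) * eW w S P := by ring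

end Expansion

theorem stmt11_general {V : Type*} [Fintype V] [DecidableEq V] {w : V → V → ℝ}
    (hsym : ∀ u v, w u v = w v u) (hw : ∀ u v, 0 ≤ w u v) (hdeg : ∀ v, 0 < deg w v)
    {k ε ρ : ℝ} (hk : 0 < k) (hε : 0 < ε) {B P S : Finset V} (hBP : B ⊆ P)
    (hS : S.Nonempty) (hvol : vol w (S ∩ B) ≤ vol w B / 2)
    (h1 : (S \ B).Nonempty →
      ρ ≤ phi w (S \ B) ∧ eW w (S \ B) univ / k ≤ eW w (S \ B) P)
    (h2 : (S ∩ B).Nonempty →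
      ρ ≤ max (phi w (S ∩ B)) (phi w (B \ S)) ∧
      ε / 3 * vol w (B \ S) * eW w (S ∩ B) (univ \ B) ≤ eW w (S ∩ B) B * vol w B ∧
      ε / 3 * vol w (S ∩ B) * eW w (B \ S) (univ \ B) ≤ eW w (B \ S) B * vol w B) :
    ε * ρ / ((ε + 6) * (k + 1)) ≤ eW w S P / vol w S ∧
    ε * ρ / ((ε + 6) * (k + 1)) * volIn w P S ≤ eW w S P := by
  have hinter : ε * ρ * vol w (S ∩ B) ≤ (ε + 6) * eW w (S ∩ B) B ∧
      ε * eW w (S ∩ B) (univ \ B) ≤ 6 * eW w (S ∩ B) B := by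
    rcases (S ∩ B).eq_empty_or_nonempty with hempty | hne
    · simp [hempty, vol, eW]
    · have hB : 0 < vol w B := vol_pos hdeg (hne.mono inter_subset_right)
      rw [← sdiff_inter_self_right B S] at h2
      obtain ⟨hφ, hin, hin'⟩ := h2 hne
      exact ⟨mul_vol_le_mul_eW_of_le_max_phi hsym hw hε.le inter_subset_right hB hvol hφ hin hin',
        mul_eW_sdiff_le_six_mul_eW hw hε.le inter_subset_right hB hvol hin⟩
  have hsdiff : ρ * vol w (S \ B) ≤ k * eW w (S \ B) P := by
    rcases (S \ B).eq_empty_or_nonempty with hempty | hne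
    · simp [hempty, vol, eW]
    · exact (mul_vol_le_eW_of_le_phi hw (h1 hne).1).trans ((div_le_iff₀' hk).1 (h1 hne).2)
  have hcond : ε * ρ / ((ε + 6) * (k + 1)) ≤ eW w S P / vol w S := by
    rw [div_le_div_iff₀ (by positivity) (vol_pos hdeg hS), mul_comm (eW w S P)]
    exact mul_vol_le_mul_eW_of_inter_of_sdiff hsym hw hε.le hk.le hBP hinter.1 hinter.2 hsdiff
  exact ⟨hcond, mul_volIn_le_eW_of_le_div_vol hw hcond⟩

theorem stmt11 {V : Type*} [Fintype V] [DecidableEq V] (w : V → V → ℝ)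
    (hsym : ∀ u v, w u v = w v u) (hnonneg : ∀ u v, 0 ≤ w u v)
    (hdeg : ∀ v, 0 < deg w v)
    (k : ℝ) (hk : 1 ≤ k) (ε : ℝ) (hε0 : 0 < ε) (hε1 : ε < 1)
    (ρ : ℝ) (hρ : 0 < ρ)
    (B P S : Finset V) (hBP : B ⊆ P) (hSP : S ⊆ P) (hSne : S.Nonempty)
    (hvol : vol w (S ∩ B) ≤ vol w B / 2)
    (h1 : (S \ B).Nonempty →
      ρ ≤ phi w (S \ B) ∧ eW w (S \ B) Finset.univ / k ≤ eW w (S \ B) P)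
    (h2 : (S ∩ B).Nonempty →
      ρ ≤ max (phi w (S ∩ B)) (phi w (B \ S)) ∧
      ε / 3 * vol w (B \ S) * eW w (S ∩ B) (Finset.univ \ B) ≤ eW w (S ∩ B) B * vol w B ∧
      ε / 3 * vol w (S ∩ B) * eW w (B \ S) (Finset.univ \ B) ≤ eW w (B \ S) B * vol w B) :
    ε * ρ / (14 * k) ≤ eW w S P / vol w S ∧
    ε * ρ / (14 * k) * volIn w P S ≤ eW w S P := by
  have hconst : ε * ρ / (14 * k) ≤ ε * ρ / ((ε + 6) * (k + 1)) :=
    div_le_div_of_nonneg_left (by positivity) (by positivity) (by nlinarith)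
  exact (stmt11_general hsym hnonneg hdeg (zero_lt_one.trans_le hk) hε0 hBP hSne hvol h1 h2).imp
    hconst.trans (mul_le_mul_of_nonneg_right hconst (volIn_nonneg hnonneg P S)).trans
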